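/- Let Ω ⊆ ℝ³ be open, let α₁ : Ω → ℂ be continuously differentiable with ∂₁α₁ = 0 (i.e. α₁ = α₁(x₂,x₃)), let α₂, α₃ ∈ ℂ be constants, and set α(x) = α₁(x)e₁ + α₂e₂ + α₃e₃, ∇α₁ = (∂₂α₁)e₂ + (∂₃α₁)e₃, and Dα = e₂(∂₂α₁)e₁ + e₃(∂₃α₁)e₁. Define the operator Π by Πu := ½(u + ie₁u + e₁ue₁ + iue₁). Then: (i) Π∘Π = I, i.e. Π(Πu) = u for every u : Ω → ℍ(ℂ); and (ii) a twice differentiable u : Ω → ℍ(ℂ) satisfies −Δu − α²u + (Dα)e₁ue₁ = 0 on Ω if and only if v := Πu satisfies −Δv − α²v + i(∇α₁)v = 0 on Ω. -/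

import Mathlib

noncomputable section

abbrev HC := Quaternion ℂ

def e1 : HC := ⟨0, 1, 0, 0⟩
def e2 : HC := ⟨0, 0, 1, 0⟩
def e3 : HC := ⟨0, 0, 0, 1⟩

def pd (k : Fin 3) (g : (Fin 3 → ℝ) → ℂ) (x : Fin 3 → ℝ) : ℂ :=
  fderiv ℝ g x (Pi.single k 1)

def lap (g : (Fin 3 → ℝ) → ℂ) (x : Fin 3 → ℝ) : ℂ :=
  pd 0 (pd 0 g) x + pd 1 (pd 1 g) x + pd 2 (pd 2 g) x

def pdq (k : Fin 3) (f : (Fin 3 → ℝ) → HC) (x : Fin 3 → ℝ) : HC :=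
  ⟨pd k (fun y => (f y).re) x, pd k (fun y => (f y).imI) x,
   pd k (fun y => (f y).imJ) x, pd k (fun y => (f y).imK) x⟩

def Dq (f : (Fin 3 → ℝ) → HC) (x : Fin 3 → ℝ) : HC :=
  e1 * pdq 0 f x + e2 * pdq 1 f x + e3 * pdq 2 f x

def lapq (f : (Fin 3 → ℝ) → HC) (x : Fin 3 → ℝ) : HC :=
  ⟨lap (fun y => (f y).re) x, lap (fun y => (f y).imI) x,
   lap (fun y => (f y).imJ) x, lap (fun y => (f y).imK) x⟩

def QDiffOn (f : (Fin 3 → ℝ) → HC) (Ω : Set (Fin 3 → ℝ)) : Prop :=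
  DifferentiableOn ℝ (fun y => (f y).re) Ω ∧ DifferentiableOn ℝ (fun y => (f y).imI) Ω ∧
  DifferentiableOn ℝ (fun y => (f y).imJ) Ω ∧ DifferentiableOn ℝ (fun y => (f y).imK) Ω

def QC2On (f : (Fin 3 → ℝ) → HC) (Ω : Set (Fin 3 → ℝ)) : Prop :=
  ContDiffOn ℝ 2 (fun y => (f y).re) Ω ∧ ContDiffOn ℝ 2 (fun y => (f y).imI) Ω ∧
  ContDiffOn ℝ 2 (fun y => (f y).imJ) Ω ∧ ContDiffOn ℝ 2 (fun y => (f y).imK) Ω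


/-- Build a biquaternion from its four complex components. -/
def quat (a b c d : ℂ) : HC := ⟨a, b, c, d⟩

/-- The operator `Π u = ½(u + ie₁u + e₁ue₁ + iue₁)` (pointwise on biquaternions). -/
def PiOp (q : HC) : HC :=
  (2⁻¹ : ℂ) • (q + (Complex.I : HC) * e1 * q + e1 * q * e1 + (Complex.I : HC) * q * e1)

theorem pd_const_mul (k : Fin 3) (c : ℂ) (g : (Fin 3 → ℝ) → ℂ) :
    pd k (fun y => c * g y) = fun y => c * pd k g y := by
  funext x
  have h := congrFun (fderiv_const_smul_field (𝕜 := ℝ) (f := g) c) x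
  exact congrArg (fun L => L (Pi.single k 1)) h

theorem lap_const_mul (c : ℂ) (g : (Fin 3 → ℝ) → ℂ) (x : Fin 3 → ℝ) :
    lap (fun y => c * g y) x = c * lap g x := by
  simp only [lap, pd_const_mul]
  ring

@[simp] theorem e1_re : e1.re = 0 := rfl
@[simp] theorem e1_imI : e1.imI = 1 := rfl
@[simp] theorem e1_imJ : e1.imJ = 0 := rfl
@[simp] theorem e1_imK : e1.imK = 0 := rfl
@[simp] theorem e2_re : e2.re = 0 := rfl
@[simp] theorem e2_imI : e2.imI = 0 := rfl
@[simp] theorem e2_imJ : e2.imJ = 1 := rfl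
@[simp] theorem e2_imK : e2.imK = 0 := rfl
@[simp] theorem e3_re : e3.re = 0 := rfl
@[simp] theorem e3_imI : e3.imI = 0 := rfl
@[simp] theorem e3_imJ : e3.imJ = 0 := rfl
@[simp] theorem e3_imK : e3.imK = 1 := rfl
@[simp] theorem quat_re (a b c d : ℂ) : (quat a b c d).re = a := rfl
@[simp] theorem quat_imI (a b c d : ℂ) : (quat a b c d).imI = b := rfl
@[simp] theorem quat_imJ (a b c d : ℂ) : (quat a b c d).imJ = c := rfl
@[simp] theorem quat_imK (a b c d : ℂ) : (quat a b c d).imK = d := rfl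
@[simp] theorem lapq_re (f : (Fin 3 → ℝ) → HC) (x : Fin 3 → ℝ) :
    (lapq f x).re = lap (fun y => (f y).re) x := rfl
@[simp] theorem lapq_imI (f : (Fin 3 → ℝ) → HC) (x : Fin 3 → ℝ) :
    (lapq f x).imI = lap (fun y => (f y).imI) x := rfl
@[simp] theorem lapq_imJ (f : (Fin 3 → ℝ) → HC) (x : Fin 3 → ℝ) :
    (lapq f x).imJ = lap (fun y => (f y).imJ) x := rfl
@[simp] theorem lapq_imK (f : (Fin 3 → ℝ) → HC) (x : Fin 3 → ℝ) :
    (lapq f x).imK = lap (fun y => (f y).imK) x := rfl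

@[simp] theorem PiOp_re (q : HC) : (PiOp q).re = -Complex.I * q.imI := by
  simp [PiOp]
  try ring

@[simp] theorem PiOp_imI (q : HC) : (PiOp q).imI = Complex.I * q.re := by
  simp [PiOp]
  try ring

@[simp] theorem PiOp_imJ (q : HC) : (PiOp q).imJ = q.imJ := by
  simp [PiOp]
  try ring

@[simp] theorem PiOp_imK (q : HC) : (PiOp q).imK = q.imK := by
  simp [PiOp]
  try ring

theorem lapq_PiOp (u : (Fin 3 → ℝ) → HC) (x : Fin 3 → ℝ) :
    lapq (fun y => PiOp (u y)) x = PiOp (lapq u x) := by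
  ext <;> simp only [lapq_re, lapq_imI, lapq_imJ, lapq_imK, PiOp_re, PiOp_imI, PiOp_imJ,
    PiOp_imK, lap_const_mul]

theorem PiOp_PiOp (q : HC) : PiOp (PiOp q) = q := by
  ext <;> simp [← mul_assoc]

theorem PiOp_zero : PiOp 0 = 0 := by
  simp [PiOp]

theorem PiOp_equation (l q : HC) (s b c : ℂ) :
    -PiOp l - (s : HC) * PiOp q + (Complex.I : HC) * (quat 0 0 b c * PiOp q) =
      PiOp (-l - (s : HC) * q + (e2 * (b : HC) * e1 + e3 * (c : HC) * e1) *
        (e1 * q * e1)) := by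
  have hI : Complex.I ^ 2 = -1 := Complex.I_sq
  ext <;> simp <;> ring_nf <;> (try simp [hI]) <;> (try ring)

/-- Remark of Subsection 4.2: when `α₁` does not depend on `x₁`,
the involution `Π` gives a one-to-one correspondence between solutions of equation (ABC),
`−Δu − α²u + (Dα)e₁ue₁ = 0`, and of the Schrödinger equation with quaternionic potential
(ABC+1), `−Δv − α²v + i(∇α₁)v = 0`. -/
theorem pi_involution_correspondence
    (Ω : Set (Fin 3 → ℝ)) (hΩ : IsOpen Ω)
    (a1 : (Fin 3 → ℝ) → ℂ) (ha1 : ContDiffOn ℝ 1 a1 Ω)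
    (ha1x1 : ∀ x ∈ Ω, pd 0 a1 x = 0)
    (a2 a3 : ℂ)
    (u : (Fin 3 → ℝ) → HC) (hu : QC2On u Ω) :
    -- (i) Π is an involution
    (∀ q : HC, PiOp (PiOp q) = q) ∧
    -- (ii) u solves (ABC) iff v = Πu solves (ABC+1)
    ((∀ x ∈ Ω,
        -lapq u x - ((-(a1 x ^ 2 + a2 ^ 2 + a3 ^ 2) : ℂ) : HC) * u x +
          (e2 * ((pd 1 a1 x : ℂ) : HC) * e1 + e3 * ((pd 2 a1 x : ℂ) : HC) * e1) *
            (e1 * u x * e1) = 0) ↔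
     (∀ x ∈ Ω,
        -lapq (fun y => PiOp (u y)) x -
          ((-(a1 x ^ 2 + a2 ^ 2 + a3 ^ 2) : ℂ) : HC) * PiOp (u x) +
          (Complex.I : HC) * (quat 0 0 (pd 1 a1 x) (pd 2 a1 x) * PiOp (u x)) = 0)) := by
  refine ⟨PiOp_PiOp, forall₂_congr fun x _ => ?_⟩
  rw [lapq_PiOp, PiOp_equation]
  constructor
  · intro h
    rw [h, PiOp_zero]
  · intro h
    rw [← PiOp_PiOp (_ + _), h, PiOp_zero]
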